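/- arXiv:2409.20357 — 3 statements merged into one kernel-verified Lean document; each statement's English description precedes it below -/
import Mathlib

section
/- Let x₁, y₁, x₂, y₂ : ℝ → ℝ be differentiable functions with x₁(t) ≠ 0 for all t, and set X = x₂/x₁, Y = y₂/x₁, Z = y₁/x₁. Then for all t ∈ ℝ, x₁(t)² · (Z'(t) + X(t)·Y'(t) − Y(t)·X'(t)) = Im( conj(z₁(t))·z₁'(t) + conj(z₂(t))·z₂'(t) ), where zⱼ(t) = xⱼ(t) + i·yⱼ(t). -/
/-- The complex derivative of `a + i b` is `a' + i b'`, for real functions `a`, `b` of a real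
variable. -/
theorem deriv_ofReal_add_ofReal_mul_I {a b : ℝ → ℝ} {t : ℝ}
    (ha : DifferentiableAt ℝ a t) (hb : DifferentiableAt ℝ b t) :
    deriv (fun u => (a u : ℂ) + (b u : ℂ) * Complex.I) t
      = ((deriv a t : ℝ) : ℂ) + ((deriv b t : ℝ) : ℂ) * Complex.I :=
  (ha.hasDerivAt.ofReal_comp.add (hb.hasDerivAt.ofReal_comp.mul_const Complex.I)).deriv

/-- For a differentiable curve with `x₁ ≠ 0`, writing `X = x₂/x₁`, `Y = y₂/x₁`,
`Z = y₁/x₁` and `zⱼ = xⱼ + i·yⱼ`, we have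
`x₁² · (Z' + X·Y' − Y·X') = Im(conj(z₁)·z₁' + conj(z₂)·z₂')`. -/
theorem radial_projection_contact_identity
    (x₁ y₁ x₂ y₂ : ℝ → ℝ)
    (hx₁ : Differentiable ℝ x₁) (hy₁ : Differentiable ℝ y₁)
    (hx₂ : Differentiable ℝ x₂) (hy₂ : Differentiable ℝ y₂)
    (hne : ∀ t : ℝ, x₁ t ≠ 0) :
    ∀ t : ℝ,
      x₁ t ^ 2 *
        (deriv (fun u => y₁ u / x₁ u) t
          + (x₂ t / x₁ t) * deriv (fun u => y₂ u / x₁ u) t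
          - (y₂ t / x₁ t) * deriv (fun u => x₂ u / x₁ u) t)
      = ((starRingEnd ℂ) ((x₁ t : ℂ) + (y₁ t : ℂ) * Complex.I)
            * deriv (fun u => (x₁ u : ℂ) + (y₁ u : ℂ) * Complex.I) t
          + (starRingEnd ℂ) ((x₂ t : ℂ) + (y₂ t : ℂ) * Complex.I)
            * deriv (fun u => (x₂ u : ℂ) + (y₂ u : ℂ) * Complex.I) t).im := by
  intro t
  have h := hne t
  rw [deriv_ofReal_add_ofReal_mul_I (hx₁ t) (hy₁ t),
    deriv_ofReal_add_ofReal_mul_I (hx₂ t) (hy₂ t),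
    deriv_fun_div (hy₁ t) (hx₁ t) h, deriv_fun_div (hy₂ t) (hx₁ t) h,
    deriv_fun_div (hx₂ t) (hx₁ t) h]
  -- Both sides equal `x₁ y₁' - y₁ x₁' + x₂ y₂' - y₂ x₂'`; on the left, the terms in `x₁'` coming
  -- from `X Y'` and `Y X'` cancel.
  simp
  field_simp
  ring
end

section
/- Define α, β : ℝ⁴ → ℂ by α(x,y,z,t) = (x² + y² + z² − t² − 1 + 2iz)/(x² + y² + z² − (t − i)²) and β(x,y,z,t) = 2(x − iy)/(x² + y² + z² − (t − i)²). Then for every (x,y,z,t) ∈ ℝ⁴ the Bateman condition ∇α × ∇β = i(∂ₜα·∇β − ∂ₜβ·∇α) holds, where ∇ denotes the gradient with respect to the spatial variables (x,y,z); explicitly, the three identities ∂_yα·∂_zβ − ∂_zα·∂_yβ = i(∂ₜα·∂ₓβ − ∂ₜβ·∂ₓα), ∂_zα·∂ₓβ − ∂ₓα·∂_zβ = i(∂ₜα·∂_yβ − ∂ₜβ·∂_yα), and ∂ₓα·∂_yβ − ∂_yα·∂ₓβ = i(∂ₜα·∂_zβ − ∂ₜβ·∂_zα) hold, where ∂ₓ,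 ∂_y, ∂_z, ∂ₜ denote the partial derivatives in x, y, z, t. -/
/-!
Write `α = A / D` and `β = B / D`, where `A`, `B` and `D` are polynomials of degree at most two in
the coordinates. The denominator `D` has no real zero: its imaginary part is `2t`, and where `t = 0`
its real part is `x² + y² + z² + 1 > 0` (`batemanDenom_ne_zero`). So the quotient rule applies at
every point of `ℝ⁴`; it is carried out once, along an arbitrary differentiable curve
(`hasDerivAt_batemanAlpha`, `hasDerivAt_batemanBeta`), and the partial derivatives are the special
case of the coordinate lines. Clearing the common denominator turns each component of the Bateman
condition into a polynomial identity modulo `I² = -1`.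
-/

/-- The denominator of the Bateman pair of Hopf type. -/
noncomputable def batemanDenom (x y z t : ℝ) : ℂ :=
  (x : ℂ) ^ 2 + (y : ℂ) ^ 2 + (z : ℂ) ^ 2 - ((t : ℂ) - Complex.I) ^ 2

/-- The map `α` of the Bateman pair of Hopf type. -/
noncomputable def batemanAlpha (x y z t : ℝ) : ℂ :=
  ((x : ℂ) ^ 2 + (y : ℂ) ^ 2 + (z : ℂ) ^ 2 - (t : ℂ) ^ 2 - 1 + 2 * Complex.I * (z : ℂ)) /
    batemanDenom x y z t

/-- The map `β` of the Bateman pair of Hopf type. -/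
noncomputable def batemanBeta (x y z t : ℝ) : ℂ :=
  2 * ((x : ℂ) - Complex.I * (y : ℂ)) / batemanDenom x y z t

theorem batemanDenom_ne_zero (x y z t : ℝ) : batemanDenom x y z t ≠ 0 := by
  intro h
  have him := congrArg Complex.im h
  have hre := congrArg Complex.re h
  simp [batemanDenom, pow_two] at him hre
  have ht : t = 0 := by linarith
  subst ht
  nlinarith [sq_nonneg x, sq_nonneg y, sq_nonneg z]

section Curve

variable {x y z t : ℝ → ℝ} {x' y' z' t' s : ℝ}

theorem hasDerivAt_batemanDenom (hx : HasDerivAt x x' s) (hy : HasDerivAt y y' s)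
    (hz : HasDerivAt z z' s) (ht : HasDerivAt t t' s) :
    HasDerivAt (fun r => batemanDenom (x r) (y r) (z r) (t r))
      (2 * (x s * x' + y s * y' + z s * z' - (t s - Complex.I) * t')) s := by
  refine ((((hx.ofReal_comp.fun_pow 2).fun_add (hy.ofReal_comp.fun_pow 2)).fun_add
    (hz.ofReal_comp.fun_pow 2)).fun_sub
    ((ht.ofReal_comp.sub_const Complex.I).fun_pow 2)).congr_deriv ?_
  push_cast
  ring

/-- The quotient rule for `α` along a curve `r ↦ (x r, y r, z r, t r)` in `ℝ⁴` with velocity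
`(x', y', z', t')` at `s`. -/
theorem hasDerivAt_batemanAlpha (hx : HasDerivAt x x' s) (hy : HasDerivAt y y' s)
    (hz : HasDerivAt z z' s) (ht : HasDerivAt t t' s) :
    HasDerivAt (fun r => batemanAlpha (x r) (y r) (z r) (t r))
      ((2 * (x s * x' + y s * y' + z s * z' - t s * t' + Complex.I * z')
            * batemanDenom (x s) (y s) (z s) (t s)
          - ((x s : ℂ) ^ 2 + (y s : ℂ) ^ 2 + (z s : ℂ) ^ 2 - (t s : ℂ) ^ 2 - 1
              + 2 * Complex.I * (z s : ℂ))
            * (2 * (x s * x' + y s * y' + z s * z' - (t s - Complex.I) * t')))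
        / batemanDenom (x s) (y s) (z s) (t s) ^ 2) s := by
  refine (((((((hx.ofReal_comp.fun_pow 2).fun_add (hy.ofReal_comp.fun_pow 2)).fun_add
    (hz.ofReal_comp.fun_pow 2)).fun_sub (ht.ofReal_comp.fun_pow 2)).sub_const 1).fun_add
    (hz.ofReal_comp.const_mul (2 * Complex.I))).fun_div
    (hasDerivAt_batemanDenom hx hy hz ht) (batemanDenom_ne_zero _ _ _ _)).congr_deriv ?_
  push_cast
  ring

/-- The quotient rule for `β` along a curve `r ↦ (x r, y r, z r, t r)` in `ℝ⁴` with velocity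
`(x', y', z', t')` at `s`. -/
theorem hasDerivAt_batemanBeta (hx : HasDerivAt x x' s) (hy : HasDerivAt y y' s)
    (hz : HasDerivAt z z' s) (ht : HasDerivAt t t' s) :
    HasDerivAt (fun r => batemanBeta (x r) (y r) (z r) (t r))
      ((2 * (x' - Complex.I * y') * batemanDenom (x s) (y s) (z s) (t s)
          - 2 * ((x s : ℂ) - Complex.I * (y s : ℂ))
            * (2 * (x s * x' + y s * y' + z s * z' - (t s - Complex.I) * t')))
        / batemanDenom (x s) (y s) (z s) (t s) ^ 2) s :=
  ((hx.ofReal_comp.fun_sub (hy.ofReal_comp.const_mul Complex.I)).const_mul 2).fun_div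
    (hasDerivAt_batemanDenom hx hy hz ht) (batemanDenom_ne_zero _ _ _ _)

end Curve

/-- The Bateman condition `∇α × ∇β = i(∂ₜα·∇β − ∂ₜβ·∇α)` holds for the Hopf-type pair
`(α, β)`, stated componentwise in terms of partial derivatives. -/
theorem bateman_condition (x y z t : ℝ) :
    (deriv (fun y' => batemanAlpha x y' z t) y * deriv (fun z' => batemanBeta x y z' t) z
        - deriv (fun z' => batemanAlpha x y z' t) z * deriv (fun y' => batemanBeta x y' z t) y
      = Complex.I *
        (deriv (fun t' => batemanAlpha x y z t') t * deriv (fun x' => batemanBeta x' y z t) x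
          - deriv (fun t' => batemanBeta x y z t') t
            * deriv (fun x' => batemanAlpha x' y z t) x)) ∧
    (deriv (fun z' => batemanAlpha x y z' t) z * deriv (fun x' => batemanBeta x' y z t) x
        - deriv (fun x' => batemanAlpha x' y z t) x * deriv (fun z' => batemanBeta x y z' t) z
      = Complex.I *
        (deriv (fun t' => batemanAlpha x y z t') t * deriv (fun y' => batemanBeta x y' z t) y
          - deriv (fun t' => batemanBeta x y z t') t
            * deriv (fun y' => batemanAlpha x y' z t) y)) ∧
    (deriv (fun x' => batemanAlpha x' y z t) x * deriv (fun y' => batemanBeta x y' z t) y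
        - deriv (fun y' => batemanAlpha x y' z t) y * deriv (fun x' => batemanBeta x' y z t) x
      = Complex.I *
        (deriv (fun t' => batemanAlpha x y z t') t * deriv (fun z' => batemanBeta x y z' t) z
          - deriv (fun t' => batemanBeta x y z t') t
            * deriv (fun z' => batemanAlpha x y z' t) z)) := by
  have hD := batemanDenom_ne_zero x y z t
  have hI : Complex.I ^ 2 = -1 := Complex.I_sq
  have c (a s : ℝ) : HasDerivAt (fun _ : ℝ => a) 0 s := hasDerivAt_const s a
  have v (s : ℝ) : HasDerivAt (fun r : ℝ => r) 1 s := hasDerivAt_id' s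
  rw [(hasDerivAt_batemanAlpha (v x) (c y x) (c z x) (c t x)).deriv,
    (hasDerivAt_batemanBeta (v x) (c y x) (c z x) (c t x)).deriv,
    (hasDerivAt_batemanAlpha (c x y) (v y) (c z y) (c t y)).deriv,
    (hasDerivAt_batemanBeta (c x y) (v y) (c z y) (c t y)).deriv,
    (hasDerivAt_batemanAlpha (c x z) (c y z) (v z) (c t z)).deriv,
    (hasDerivAt_batemanBeta (c x z) (c y z) (v z) (c t z)).deriv,
    (hasDerivAt_batemanAlpha (c x t) (c y t) (c z t) (v t)).deriv,
    (hasDerivAt_batemanBeta (c x t) (c y t) (c z t) (v t)).deriv]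
  have hE : batemanDenom x y z t =
      (x : ℂ) ^ 2 + (y : ℂ) ^ 2 + (z : ℂ) ^ 2 - ((t : ℂ) - Complex.I) ^ 2 := rfl
  -- Only `D ≠ 0` matters for clearing denominators; after that `D` is replaced by its formula, and
  -- `I` is treated as an indeterminate `i` subject to `i ^ 2 = -1`.
  generalize batemanDenom x y z t = D at hD hE ⊢
  generalize Complex.I = i at hI hE ⊢
  push_cast
  refine ⟨?_, ?_, ?_⟩ <;> field_simp <;> subst hE <;> grind
end

section
/- Define α, β : ℝ⁴ → ℂ by α(x,y,z,t) = (x² + y² + z² − t² − 1 + 2iz)/(x² + y² + z² − (t − i)²) and β(x,y,z,t) = 2(x − iy)/(x² + y² + z² − (t − i)²), and let Q(x,y,z,t) = x² + y² + z² + t² + 1 − 2tz. Then for all (x,y,z,t) ∈ ℝ⁴: Re(α) < 1 (in particular 1 − Re(α) ≠ 0), and the following identities hold: Re(β)/(1 − Re(α)) = (−2ty + x(x²+y²+z²−t²+1))/Q, −Im(β)/(1 − Re(α)) = (2tx + y(x²+y²+z²−t²+1))/Q, and Im(α)/(1 − Re(α)) = (−t(x²+y²+z²−t²−1) + z(x²+y²+z²−t²+1))/Q.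 -/
/-- With `A = x² + y² + z² - t² + 1`, the denominator is `A + 2it`. -/
theorem batemanDenom_eq (x y z t : ℝ) :
    batemanDenom x y z t = ⟨x ^ 2 + y ^ 2 + z ^ 2 - t ^ 2 + 1, 2 * t⟩ := by
  rw [Complex.mk_eq_add_mul_I, batemanDenom]
  push_cast
  linear_combination -Complex.I_sq

theorem batemanAlpha_eq (x y z t : ℝ) :
    batemanAlpha x y z t = (⟨x ^ 2 + y ^ 2 + z ^ 2 - t ^ 2 - 1, 2 * z⟩ : ℂ) /
      ⟨x ^ 2 + y ^ 2 + z ^ 2 - t ^ 2 + 1, 2 * t⟩ := by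
  rw [batemanAlpha, batemanDenom_eq]
  congr 1
  rw [Complex.mk_eq_add_mul_I]
  push_cast
  ring

theorem batemanBeta_eq (x y z t : ℝ) :
    batemanBeta x y z t = (⟨2 * x, -(2 * y)⟩ : ℂ) /
      ⟨x ^ 2 + y ^ 2 + z ^ 2 - t ^ 2 + 1, 2 * t⟩ := by
  rw [batemanBeta, batemanDenom_eq]
  congr 1
  rw [Complex.mk_eq_add_mul_I]
  push_cast
  ring

/-- Explicit rational formulas for `Φₜ⁻¹ = φ₀ ∘ (α,β)|ₜ`: one has `Re(α) < 1` everywhere,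
and the three coordinates `Re(β)/(1−Re(α))`, `−Im(β)/(1−Re(α))`, `Im(α)/(1−Re(α))` are
given by the stated rational expressions with denominator `Q = x²+y²+z²+t²+1−2tz`. -/
theorem bateman_inverse_isotopy_formulas (x y z t : ℝ) :
    (batemanAlpha x y z t).re < 1 ∧
    (1 - (batemanAlpha x y z t).re ≠ 0) ∧
    ((batemanBeta x y z t).re / (1 - (batemanAlpha x y z t).re)
      = (-(2 * t * y) + x * (x ^ 2 + y ^ 2 + z ^ 2 - t ^ 2 + 1))
          / (x ^ 2 + y ^ 2 + z ^ 2 + t ^ 2 + 1 - 2 * t * z)) ∧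
    (-(batemanBeta x y z t).im / (1 - (batemanAlpha x y z t).re)
      = (2 * t * x + y * (x ^ 2 + y ^ 2 + z ^ 2 - t ^ 2 + 1))
          / (x ^ 2 + y ^ 2 + z ^ 2 + t ^ 2 + 1 - 2 * t * z)) ∧
    ((batemanAlpha x y z t).im / (1 - (batemanAlpha x y z t).re)
      = (-(t * (x ^ 2 + y ^ 2 + z ^ 2 - t ^ 2 - 1))
            + z * (x ^ 2 + y ^ 2 + z ^ 2 - t ^ 2 + 1))
          / (x ^ 2 + y ^ 2 + z ^ 2 + t ^ 2 + 1 - 2 * t * z)) := by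
  have hQ : 0 < x ^ 2 + y ^ 2 + z ^ 2 + t ^ 2 + 1 - 2 * t * z := by
    nlinarith [sq_nonneg x, sq_nonneg y, sq_nonneg (z - t)]
  -- `|A + 2it|²` vanishes only if `t = 0`, but then `A ≥ 1`.
  have hN : 0 < (x ^ 2 + y ^ 2 + z ^ 2 - t ^ 2 + 1) ^ 2 + (2 * t) ^ 2 := by
    rcases eq_or_ne t 0 with rfl | ht
    · have : 0 < x ^ 2 + y ^ 2 + z ^ 2 - 0 ^ 2 + 1 := by
        nlinarith [sq_nonneg x, sq_nonneg y, sq_nonneg z]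
      positivity
    · positivity
  have hre : 1 - (batemanAlpha x y z t).re =
      2 * (x ^ 2 + y ^ 2 + z ^ 2 + t ^ 2 + 1 - 2 * t * z) /
        ((x ^ 2 + y ^ 2 + z ^ 2 - t ^ 2 + 1) ^ 2 + (2 * t) ^ 2) := by
    rw [batemanAlpha_eq, Complex.div_re, Complex.normSq_mk, ← sq, ← sq, ← add_div,
      eq_div_iff hN.ne', sub_mul, div_mul_cancel₀ _ hN.ne']
    ring
  have hpos : 0 < 1 - (batemanAlpha x y z t).re := by
    rw [hre]
    exact div_pos (mul_pos two_pos hQ) hN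
  -- Over the common denominator `|A + 2it|²`, each coordinate is a quotient `(p / N) / (2Q / N)`.
  have key : ∀ {p q Q N : ℝ}, 0 < N → 0 < Q → p = 2 * q →
      p / N / (2 * Q / N) = q / Q := by
    intro p q Q N hN hQ h
    rw [div_div_div_cancel_right₀ hN.ne', h, mul_div_mul_left _ _ two_ne_zero]
  refine ⟨sub_pos.mp hpos, hpos.ne', ?_, ?_, ?_⟩
  · rw [hre, batemanBeta_eq, Complex.div_re, Complex.normSq_mk, ← sq, ← sq, ← add_div]
    exact key hN hQ (by ring)
  · rw [hre, batemanBeta_eq, Complex.div_im, Complex.normSq_mk, ← sq, ← sq, ← sub_div, ← neg_div]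
    exact key hN hQ (by ring)
  · rw [hre, batemanAlpha_eq, Complex.div_im, Complex.normSq_mk, ← sq, ← sq, ← sub_div]
    exact key hN hQ (by ring)
end
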